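/- arXiv:2509.02205 — 3 statements merged into one kernel-verified Lean document; each statement's English description precedes it below -/
import Mathlib

section
/- Let X and Y be Polish spaces, μ ∈ P(X), c : X×Y → [0,∞] lower semicontinuous, L : Y → [0,∞] lower semicontinuous with compact sublevel sets, and H : Y×Y → [0,∞] lower semicontinuous and symmetric. If inf_{γ ∈ P_μ(X×Y)} J(γ) < ∞, then the infimum is attained: there exists γ̄ ∈ P_μ(X×Y) with J(γ̄) = inf_{γ ∈ P_μ(X×Y)} J(γ). -/
open MeasureTheory Filter Topology

/-- The layer cake formula for functions with values in `[0, ∞]`. -/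
lemma lintegral_eq_lintegral_meas_ofReal_lt {Ω : Type*} [MeasurableSpace Ω]
    (ν : Measure Ω) [SFinite ν] {f : Ω → ENNReal} (hf : Measurable f) :
    ∫⁻ ω, f ω ∂ν = ∫⁻ t in Set.Ioi (0 : ℝ), ν {ω | ENNReal.ofReal t < f ω} := by
  have hvol (a : ENNReal) :
      volume.restrict (Set.Ioi (0 : ℝ)) {t | ENNReal.ofReal t < a} = a := by
    rw [Measure.restrict_apply (measurableSet_lt (by fun_prop) measurable_const)]
    induction a with
    | top => simp
    | coe a =>
      have : {t : ℝ | ENNReal.ofReal t < a} ∩ Set.Ioi 0 = Set.Ioo 0 (a : ℝ) := by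
        ext t
        simp only [Set.mem_inter_iff, Set.mem_ofPred_eq, Set.mem_Ioi, Set.mem_Ioo]
        rw [and_comm]
        refine and_congr_right fun ht => ?_
        rw [← ENNReal.ofReal_coe_nnreal, ENNReal.ofReal_lt_ofReal_iff_of_nonneg ht.le]
      rw [this]
      simp
  have hs : MeasurableSet {p : Ω × ℝ | ENNReal.ofReal p.2 < f p.1} :=
    measurableSet_lt (by fun_prop) (by fun_prop)
  calc ∫⁻ ω, f ω ∂ν
      = (ν.prod (volume.restrict (Set.Ioi (0 : ℝ)))) {p | ENNReal.ofReal p.2 < f p.1} := by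
        rw [Measure.prod_apply hs]
        exact lintegral_congr fun ω => (hvol (f ω)).symm
    _ = _ := Measure.prod_apply_symm hs

/-- Integration of a lower semicontinuous `[0, ∞]`-valued function is lower semicontinuous for the
narrow topology. -/
lemma LowerSemicontinuous.lintegral_probabilityMeasure {Ω : Type*} [TopologicalSpace Ω]
    [PolishSpace Ω] [MeasurableSpace Ω] [BorelSpace Ω] {f : Ω → ENNReal}
    (hf : LowerSemicontinuous f) :
    LowerSemicontinuous fun P : ProbabilityMeasure Ω => ∫⁻ ω, f ω ∂(P : Measure Ω) := by
  rw [lowerSemicontinuous_iff_le_liminf]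
  intro P
  simp only [fun Q : ProbabilityMeasure Ω =>
    lintegral_eq_lintegral_meas_ofReal_lt (Q : Measure Ω) hf.measurable]
  refine (lintegral_mono fun t => ?_).trans (lintegral_liminf_le fun Q => ?_)
  · exact ProbabilityMeasure.le_liminf_measure_open_of_tendsto tendsto_id
      (hf.isOpen_preimage (ENNReal.ofReal t))
  · exact Antitone.measurable fun s t hst =>
      measure_mono fun ω hω => (ENNReal.ofReal_le_ofReal hst).trans_lt hω

/-- A uniform bound on the integral of a function with compact sublevel sets gives tightness. -/
lemma isTightMeasureSet_of_lintegral_le {Ω : Type*} [TopologicalSpace Ω] [MeasurableSpace Ω]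
    {S : Set (Measure Ω)} {f : Ω → ENNReal} (hf : Measurable f)
    (hcomp : ∀ κ : NNReal, 0 < κ → IsCompact {ω | f ω ≤ κ}) {M : ENNReal} (hM : M ≠ ⊤)
    (hS : ∀ ν ∈ S, ∫⁻ ω, f ω ∂ν ≤ M) : IsTightMeasureSet S := by
  rw [isTightMeasureSet_iff_exists_isCompact_measure_compl_le]
  intro ε hε
  lift M to NNReal using hM
  obtain rfl | hε' := eq_or_ne ε ⊤
  · exact ⟨∅, isCompact_empty, fun _ _ => le_top⟩
  lift ε to NNReal using hε'
  have hε0 : 0 < ε := by exact_mod_cast hε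
  have hκ : 0 < (M + 1) / ε := by positivity
  refine ⟨_, hcomp _ hκ, fun ν hν => ?_⟩
  calc ν {ω | f ω ≤ ((M + 1) / ε : NNReal)}ᶜ
      ≤ ν {ω | (((M + 1) / ε : NNReal) : ENNReal) ≤ f ω} :=
        measure_mono fun ω hω => by
          rw [Set.mem_compl_iff, Set.mem_ofPred_eq, not_le] at hω
          exact hω.le
    _ ≤ (∫⁻ ω, f ω ∂ν) / ((M + 1) / ε : NNReal) :=
        meas_ge_le_lintegral_div hf.aemeasurable (by exact_mod_cast hκ.ne') ENNReal.coe_ne_top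
    _ ≤ M / ((M + 1) / ε : NNReal) := by gcongr; exact hS ν hν
    _ ≤ ε := by
        rw [← ENNReal.coe_div hκ.ne', ENNReal.coe_le_coe, div_le_iff₀ hκ,
          mul_div_cancel₀ _ hε0.ne']
        exact le_self_add

/-- If the potential functional
`J(γ) = ∫ c dγ + ∫ L dν + ∫∫ H dν⊗ν` (with `ν` the second marginal of `γ`) has finite infimum
over `P_μ(X×Y)`, then the infimum is attained. -/
theorem potential_functional_attains_min
    {X Y : Type*}
    [TopologicalSpace X] [PolishSpace X] [MeasurableSpace X] [BorelSpace X]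
    [TopologicalSpace Y] [PolishSpace Y] [MeasurableSpace Y] [BorelSpace Y]
    (μ : Measure X) [IsProbabilityMeasure μ]
    (c : X × Y → ENNReal) (hc : LowerSemicontinuous c)
    (L : Y → ENNReal) (hL : LowerSemicontinuous L)
    (hLcomp : ∀ κ : NNReal, 0 < κ → IsCompact {y : Y | L y ≤ (κ : ENNReal)})
    (H : Y × Y → ENNReal) (hH : LowerSemicontinuous H)
    (hHsymm : ∀ y y' : Y, H (y, y') = H (y', y))
    (J : Measure (X × Y) → ENNReal)
    (hJ : ∀ γ : Measure (X × Y), J γ =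
      ∫⁻ p, c p ∂γ + ∫⁻ y, L y ∂(γ.map Prod.snd) +
        ∫⁻ q, H q ∂((γ.map Prod.snd).prod (γ.map Prod.snd)))
    (hfin : (⨅ γ ∈ {γ : Measure (X × Y) | IsProbabilityMeasure γ ∧ γ.map Prod.fst = μ}, J γ) < ⊤) :
    ∃ γ' ∈ {γ : Measure (X × Y) | IsProbabilityMeasure γ ∧ γ.map Prod.fst = μ},
      J γ' = ⨅ γ ∈ {γ : Measure (X × Y) | IsProbabilityMeasure γ ∧ γ.map Prod.fst = μ}, J γ := by
  obtain ⟨γ₀, ⟨hγ₀, hγ₀μ⟩, hγ₀J⟩ : ∃ γ₀ : Measure (X × Y),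
      (IsProbabilityMeasure γ₀ ∧ γ₀.map Prod.fst = μ) ∧ J γ₀ < ⊤ := by
    simpa [iInf_lt_iff] using hfin
  let fstMarginal : ProbabilityMeasure (X × Y) → ProbabilityMeasure X :=
    fun γ => γ.map measurable_fst.aemeasurable
  let sndMarginal : ProbabilityMeasure (X × Y) → ProbabilityMeasure Y :=
    fun γ => γ.map measurable_snd.aemeasurable
  have hfst : Continuous fstMarginal := ProbabilityMeasure.continuous_map continuous_fst
  have hsnd : Continuous sndMarginal := ProbabilityMeasure.continuous_map continuous_snd
  have hJlsc : LowerSemicontinuous fun γ : ProbabilityMeasure (X × Y) => J γ := by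
    simp only [hJ]
    refine (hc.lintegral_probabilityMeasure.add
      (hL.lintegral_probabilityMeasure.comp hsnd)).add
      (hH.lintegral_probabilityMeasure.comp
        (g := fun γ => (sndMarginal γ).prod (sndMarginal γ)) ?_)
    exact ProbabilityMeasure.continuous_prod.comp (hsnd.prodMk hsnd)
  let S : Set (ProbabilityMeasure (X × Y)) :=
    {γ | (γ : Measure (X × Y)).map Prod.fst = μ ∧ J γ ≤ J γ₀}
  have hSclosed : IsClosed S := by
    let μP : ProbabilityMeasure X := ⟨μ, inferInstance⟩
    have hS : S = fstMarginal ⁻¹' {μP} ∩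
        (fun γ : ProbabilityMeasure (X × Y) => J γ) ⁻¹' Set.Iic (J γ₀) := by
      ext γ
      refine and_congr_left' ?_
      rw [Set.mem_preimage, Set.mem_singleton_iff]
      exact (Subtype.ext_iff (a1 := fstMarginal γ) (a2 := μP)).symm
    rw [hS]
    exact (isClosed_singleton.preimage hfst).inter (hJlsc.isClosed_preimage (J γ₀))
  have hStight :
      IsTightMeasureSet {((γ : ProbabilityMeasure (X × Y)) : Measure (X × Y)) | γ ∈ S} := by
    refine IsTightMeasureSet.prodMk
      ((isTightMeasureSet_singleton (μ := μ)).subset ?_)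
      (isTightMeasureSet_of_lintegral_le hL.measurable hLcomp hγ₀J.ne ?_)
    · rintro _ ⟨_, ⟨γ, hγ, rfl⟩, rfl⟩
      exact hγ.1
    · rintro _ ⟨_, ⟨γ, hγ, rfl⟩, rfl⟩
      refine le_trans ?_ hγ.2
      rw [hJ]
      exact le_add_self.trans le_self_add
  have hScompact : IsCompact S :=
    hSclosed.closure_eq ▸ isCompact_closure_of_isTightMeasureSet hStight
  obtain ⟨γ', hγ'S, hmin⟩ := LowerSemicontinuousOn.exists_isMinOn
    (s := S) ⟨⟨γ₀, hγ₀⟩, hγ₀μ, le_rfl⟩ hScompact (hJlsc.lowerSemicontinuousOn S)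
  refine ⟨γ', ⟨inferInstance, hγ'S.1⟩,
    le_antisymm (le_iInf₂ ?_) (iInf₂_le _ ⟨inferInstance, hγ'S.1⟩)⟩
  rintro γ ⟨hγ, hγμ⟩
  by_cases hle : J γ ≤ J γ₀
  · exact hmin (a := (⟨γ, hγ⟩ : ProbabilityMeasure (X × Y))) ⟨hγμ, hle⟩
  · exact hγ'S.2.trans (not_le.1 hle).le
end

section
/- Let X and Y be Polish spaces, μ ∈ P(X), c : X×Y → [0,∞] lower semicontinuous, L : Y → [0,∞] lower semicontinuous with compact sublevel sets, and H : Y×Y → [0,∞] lower semicontinuous and symmetric. Assume inf_{P_μ(X×Y)} J < ∞, and assume that for every n ∈ ℕ there exist a constant C_n ∈ (0,∞) and a measurable family (ν_n^y)_{y∈Y} ⊆ P(Y) (i.e. y ↦ ν_n^y(B) Borel for every Borel B ⊆ Y) such that: (1) ∫_{Y×Y} H dν_n^y⊗ν_n^{y'} ≤ C_n(1 + L(y) + L(y')) for all y,y' ∈ Y; (2) for every (x,y,ν) with Φ(x,y,ν) < ∞, ∫_Y Φ(x,z,ν) dν_n^y(z) → Φ(x,y,ν) as n → ∞. Then every minimizer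 of J over P_μ(X×Y) is a Cournot–Nash equilibrium. -/
open MeasureTheory Filter Topology
open scoped ENNReal

section Selection

variable {X Y : Type*} [MeasurableSpace X]

/-- One refinement step in the construction of a measurable selection: a compact-valued
multifunction whose hitting sets of closed sets are measurable contains another one with values in
balls of radius `ε` around a measurable centre. -/
theorem exists_refinement_closedBall [MetricSpace Y] [SecondCountableTopology Y] [Nonempty Y]
    [MeasurableSpace Y] {ε : ℝ} (hε : 0 < ε) (K : X → Set Y)
    (hK : ∀ x, IsCompact (K x) ∧ (K x).Nonempty)
    (hmeas : ∀ F : Set Y, IsClosed F → MeasurableSet {x | (K x ∩ F).Nonempty}) :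
    ∃ K' : X → Set Y, ((∀ x, IsCompact (K' x) ∧ (K' x).Nonempty) ∧
      ∀ F : Set Y, IsClosed F → MeasurableSet {x | (K' x ∩ F).Nonempty}) ∧
      (∀ x, K' x ⊆ K x) ∧
      ∃ e : X → Y, Measurable e ∧ ∀ x, ∀ y ∈ K' x, dist y (e x) ≤ ε := by
  classical
  let d := TopologicalSpace.denseSeq Y
  have hex : ∀ x, ∃ j, (K x ∩ Metric.closedBall (d j) ε).Nonempty := fun x => by
    obtain ⟨y, hy⟩ := (hK x).2
    obtain ⟨j, hj⟩ := (TopologicalSpace.denseRange_denseSeq Y).exists_dist_lt y hε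
    exact ⟨j, y, hy, hj.le⟩
  have hj : Measurable fun x => Nat.find (hex x) :=
    measurable_find hex fun k => hmeas _ Metric.isClosed_closedBall
  refine ⟨fun x => K x ∩ Metric.closedBall (d (Nat.find (hex x))) ε,
    ⟨fun x => ⟨(hK x).1.inter_right Metric.isClosed_closedBall, Nat.find_spec (hex x)⟩,
      fun F hF => ?_⟩, fun x => Set.inter_subset_left,
    fun x => d (Nat.find (hex x)), measurable_from_nat.comp hj, fun x y hy => hy.2⟩
  have hunion : {x | (K x ∩ Metric.closedBall (d (Nat.find (hex x))) ε ∩ F).Nonempty} =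
      ⋃ j, (fun x => Nat.find (hex x)) ⁻¹' {j} ∩
        {x | (K x ∩ (Metric.closedBall (d j) ε ∩ F)).Nonempty} := by
    ext x
    simp only [Set.mem_ofPred_eq, Set.mem_iUnion, Set.mem_inter_iff, Set.mem_preimage,
      Set.mem_singleton_iff, Set.inter_assoc]
    exact ⟨fun h => ⟨_, rfl, h⟩, fun ⟨j, hj, h⟩ => by rwa [hj]⟩
  rw [hunion]
  exact .iUnion fun j => (hj (measurableSet_singleton j)).inter
    (hmeas _ (Metric.isClosed_closedBall.inter hF))

/-- A compact-valued multifunction whose hitting sets of closed sets are measurable admits a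
measurable selection. -/
theorem exists_measurable_selection_of_isCompact [TopologicalSpace Y]
    [TopologicalSpace.MetrizableSpace Y] [SecondCountableTopology Y] [Nonempty Y]
    [MeasurableSpace Y] [BorelSpace Y] (K : X → Set Y)
    (hK : ∀ x, IsCompact (K x) ∧ (K x).Nonempty)
    (hmeas : ∀ F : Set Y, IsClosed F → MeasurableSet {x | (K x ∩ F).Nonempty}) :
    ∃ T : X → Y, Measurable T ∧ ∀ x, T x ∈ K x := by
  let _ := TopologicalSpace.metrizableSpaceMetric Y
  let P : (X → Set Y) → Prop := fun K => (∀ x, IsCompact (K x) ∧ (K x).Nonempty) ∧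
    ∀ F : Set Y, IsClosed F → MeasurableSet {x | (K x ∩ F).Nonempty}
  have hstep : ∀ (n : ℕ) (K : Subtype P), ∃ K' : Subtype P, (∀ x, K'.1 x ⊆ K.1 x) ∧
      ∃ e : X → Y, Measurable e ∧ ∀ x, ∀ y ∈ K'.1 x, dist y (e x) ≤ 1 / ((n : ℝ) + 1) := by
    rintro n ⟨K, h⟩
    obtain ⟨K', h', hsub, he⟩ := exists_refinement_closedBall
      (Nat.one_div_pos_of_nat (α := ℝ) (n := n)) K h.1 h.2
    exact ⟨⟨K', h'⟩, hsub, he⟩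
  choose next hsub e he hdist using hstep
  let S : ℕ → Subtype P := fun n => Nat.rec ⟨K, hK, hmeas⟩ next n
  have hne : ∀ x, (⋂ n, (S n).1 x).Nonempty := fun x =>
    IsCompact.nonempty_iInter_of_sequence_nonempty_isCompact_isClosed _
      (fun n => hsub n (S n) x) (fun n => ((S n).2.1 x).2) ((S 0).2.1 x).1
      (fun n => ((S n).2.1 x).1.isClosed)
  choose T hT using hne
  simp only [Set.mem_iInter] at hT
  refine ⟨T, measurable_of_tendsto_metrizable (fun n => he n (S n)) ?_, fun x => hT x 0⟩
  rw [tendsto_pi_nhds]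
  intro x
  rw [tendsto_iff_dist_tendsto_zero]
  refine squeeze_zero (fun _ => dist_nonneg) (fun n => ?_)
    (tendsto_one_div_add_atTop_nhds_zero_nat (𝕜 := ℝ))
  rw [dist_comm]
  exact hdist n (S n) x _ (hT x (n + 1))

end Selection

section Argmin

variable {X Y : Type*} [TopologicalSpace X] [TopologicalSpace Y] {G : X × Y → ℝ≥0∞}

/-- A lower semicontinuous function with compact sublevels attains its finite partial infima on
closed sets. -/
theorem exists_eq_biInf_of_lt_top (hG : LowerSemicontinuous G)
    (hcomp : ∀ a : ℝ≥0∞, a < ⊤ → ∃ K : Set Y, IsCompact K ∧ ∀ x y, G (x, y) ≤ a → y ∈ K)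
    {F : Set Y} (hF : IsClosed F) {x : X} (hx : ⨅ y ∈ F, G (x, y) < ⊤) :
    ∃ y ∈ F, G (x, y) = ⨅ y ∈ F, G (x, y) := by
  obtain ⟨a, ha, hat⟩ := exists_between hx
  obtain ⟨K, hK, hKG⟩ := hcomp a hat
  simp only [iInf_lt_iff] at ha
  obtain ⟨y₀, hy₀, ha₀⟩ := ha
  obtain ⟨y, hy, hmin⟩ := LowerSemicontinuousOn.exists_isMinOn (s := K ∩ F)
    ⟨y₀, hKG x y₀ ha₀.le, hy₀⟩ (hK.inter_right hF)
    ((LowerSemicontinuous.comp hG (Continuous.prodMk_right x)).lowerSemicontinuousOn _)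
  refine ⟨y, hy.2, le_antisymm (le_iInf₂ fun z hz => ?_) (iInf₂_le y hy.2)⟩
  by_cases hza : G (x, z) ≤ a
  · exact hmin ⟨hKG x z hza, hz⟩
  · exact (hmin ⟨hKG x y₀ ha₀.le, hy₀⟩).trans (ha₀.le.trans (not_le.1 hza).le)

theorem lowerSemicontinuous_biInf_of_compact_sublevels (hG : LowerSemicontinuous G)
    (hcomp : ∀ a : ℝ≥0∞, a < ⊤ → ∃ K : Set Y, IsCompact K ∧ ∀ x y, G (x, y) ≤ a → y ∈ K)
    {F : Set Y} (hF : IsClosed F) : LowerSemicontinuous fun x => ⨅ y ∈ F, G (x, y) := by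
  rw [lowerSemicontinuous_iff_isClosed_preimage]
  intro a
  rcases eq_or_ne a ⊤ with rfl | ha
  · simp
  obtain ⟨K, hK, hKG⟩ := hcomp a ha.lt_top
  have := isCompact_iff_compactSpace.1 hK
  have hcl : IsClosed ((fun p : X × K => (p.1, (p.2 : Y))) ⁻¹' (G ⁻¹' Set.Iic a ∩ Prod.snd ⁻¹' F)) :=
    ((hG.isClosed_preimage a).inter (hF.preimage continuous_snd)).preimage (by fun_prop)
  convert isClosedMap_fst_of_compactSpace _ hcl using 1
  ext x
  simp only [Set.mem_preimage, Set.mem_Iic, Set.mem_image, Set.mem_inter_iff, Prod.exists,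
    exists_and_right, exists_eq_right, Subtype.exists]
  constructor
  · intro h
    obtain ⟨y, hy, hyG⟩ := exists_eq_biInf_of_lt_top hG hcomp hF (h.trans_lt ha.lt_top)
    exact ⟨y, ⟨hKG x y (hyG.trans_le h), hyG.trans_le h⟩, hy⟩
  · rintro ⟨y, ⟨-, hy⟩, hyF⟩
    exact (iInf₂_le y hyF).trans hy

/-- A lower semicontinuous function with compact sublevels has a measurable partial minimizer. -/
theorem exists_measurable_argmin [MeasurableSpace X] [BorelSpace X]
    [TopologicalSpace.MetrizableSpace Y] [SecondCountableTopology Y] [Nonempty Y]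
    [MeasurableSpace Y] [BorelSpace Y] (hG : LowerSemicontinuous G)
    (hcomp : ∀ a : ℝ≥0∞, a < ⊤ → ∃ K : Set Y, IsCompact K ∧ ∀ x y, G (x, y) ≤ a → y ∈ K) :
    ∃ T : X → Y, Measurable T ∧ ∀ x, G (x, T x) = ⨅ y, G (x, y) := by
  classical
  let f : X → ℝ≥0∞ := fun x => ⨅ y ∈ (Set.univ : Set Y), G (x, y)
  have hf : Measurable f :=
    (lowerSemicontinuous_biInf_of_compact_sublevels hG hcomp isClosed_univ).measurable
  let y₀ : Y := Classical.arbitrary Y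
  let K : X → Set Y := fun x => if f x < ⊤ then {y | G (x, y) ≤ f x} else {y₀}
  have hK : ∀ x, IsCompact (K x) ∧ (K x).Nonempty := by
    intro x
    by_cases hx : f x < ⊤
    · simp only [K, hx, if_true]
      obtain ⟨C, hC, hCG⟩ := hcomp _ hx
      obtain ⟨y, -, hy⟩ := exists_eq_biInf_of_lt_top hG hcomp isClosed_univ hx
      exact ⟨hC.of_isClosed_subset
        ((LowerSemicontinuous.comp hG (Continuous.prodMk_right x)).isClosed_preimage (f x))
        (fun y hy => hCG x y hy), y, hy.le⟩
    · simp [K, hx]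
  have hmeas : ∀ F : Set Y, IsClosed F → MeasurableSet {x | (K x ∩ F).Nonempty} := by
    intro F hF
    have hset : {x | (K x ∩ F).Nonempty} =
        ({x | f x < ⊤} ∩ {x | ⨅ y ∈ F, G (x, y) ≤ f x}) ∪ ({x | f x < ⊤}ᶜ ∩ {_x | y₀ ∈ F}) := by
      ext x
      by_cases hx : f x < ⊤
      · simp only [K, hx, if_true, Set.mem_ofPred_eq, Set.mem_union, Set.mem_inter_iff,
          Set.mem_compl_iff, true_and, not_true, false_and, or_false]
        constructor
        · rintro ⟨y, hy, hyF⟩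
          exact (iInf₂_le y hyF).trans hy
        · intro h
          obtain ⟨y, hy, hyG⟩ := exists_eq_biInf_of_lt_top hG hcomp hF (h.trans_lt hx)
          exact ⟨y, hyG.trans_le h, hy⟩
      · simp [K, hx]
    rw [hset]
    exact ((measurableSet_lt hf measurable_const).inter (measurableSet_le
      (lowerSemicontinuous_biInf_of_compact_sublevels hG hcomp hF).measurable hf)).union
      ((measurableSet_lt hf measurable_const).compl.inter (.const _))
  obtain ⟨T, hT, hTK⟩ := exists_measurable_selection_of_isCompact K hK hmeas
  refine ⟨T, hT, fun x => le_antisymm ?_ (iInf_le _ _)⟩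
  by_cases hx : f x < ⊤
  · have := hTK x
    simp only [K, hx, if_true, Set.mem_ofPred_eq] at this
    simpa [f] using this
  · have : f x = ⊤ := not_lt_top_iff.1 hx
    simp only [f, Set.mem_univ, iInf_pos] at this
    simp [this]

end Argmin

/-- Fatou's lemma: integrating out one variable preserves lower semicontinuity. -/
theorem LowerSemicontinuous.lintegral_prod_right {Y Z : Type*} [TopologicalSpace Y]
    [FirstCountableTopology Y] [TopologicalSpace Z] [MeasurableSpace Z] [OpensMeasurableSpace Z]
    {H : Y × Z → ℝ≥0∞} (hH : LowerSemicontinuous H) (ρ : Measure Z) :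
    LowerSemicontinuous fun y => ∫⁻ z, H (y, z) ∂ρ := by
  rw [lowerSemicontinuous_iff_isClosed_preimage]
  intro a
  refine IsSeqClosed.isClosed fun u y hu huy => ?_
  calc ∫⁻ z, H (y, z) ∂ρ ≤ ∫⁻ z, liminf (fun n => H (u n, z)) atTop ∂ρ := by
        refine lintegral_mono fun z => le_of_forall_lt fun b hb => ?_
        obtain ⟨b', hbb', hb'⟩ := exists_between hb
        refine hbb'.trans_le (le_liminf_of_le (by isBoundedDefault) ?_)
        have : Tendsto (fun n => (u n, z)) atTop (𝓝 (y, z)) := huy.prodMk_nhds tendsto_const_nhds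
        exact (this.eventually (hH (y, z) b' hb')).mono fun n hn => hn.le
    _ ≤ liminf (fun n => ∫⁻ z, H (u n, z) ∂ρ) atTop :=
        lintegral_liminf_le fun n => (LowerSemicontinuous.comp hH (Continuous.prodMk_right (u n))).measurable
    _ ≤ a := liminf_le_of_frequently_le' (Frequently.of_forall hu)

section FirstVariation

variable {X Y : Type*} [MeasurableSpace X] [MeasurableSpace Y]

theorem lintegral_prod_comm_of_symm {H : Y × Y → ℝ≥0∞} (hHsymm : ∀ y y', H (y, y') = H (y', y))
    (a b : Measure Y) [SFinite a] [SFinite b] :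
    ∫⁻ q, H q ∂(a.prod b) = ∫⁻ q, H q ∂(b.prod a) := by
  rw [← lintegral_prod_swap]
  exact lintegral_congr fun q => hHsymm _ _

/-- Expansion of the linear-plus-quadratic energy along a segment. -/
theorem energy_add_smul (c : X × Y → ℝ≥0∞) {H : Y × Y → ℝ≥0∞}
    (hHsymm : ∀ y y', H (y, y') = H (y', y)) (σ η : Measure (X × Y)) [IsFiniteMeasure σ]
    [IsFiniteMeasure η] (t : ℝ≥0∞) :
    ∫⁻ p, c p ∂(σ + t • η) +
        ∫⁻ q, H q ∂(((σ + t • η).map Prod.snd).prod ((σ + t • η).map Prod.snd)) =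
      (∫⁻ p, c p ∂σ + ∫⁻ q, H q ∂((σ.map Prod.snd).prod (σ.map Prod.snd))) +
        t * (∫⁻ p, c p ∂η + 2 * ∫⁻ q, H q ∂((η.map Prod.snd).prod (σ.map Prod.snd)) +
          t * ∫⁻ q, H q ∂((η.map Prod.snd).prod (η.map Prod.snd))) := by
  rw [Measure.map_add _ _ measurable_snd, Measure.map_smul, Measure.prod_add, Measure.add_prod,
    Measure.add_prod, Measure.prod_smul_right, Measure.prod_smul_right, Measure.prod_smul_left,
    Measure.prod_smul_left]
  simp only [lintegral_add_measure, lintegral_smul_measure, smul_eq_mul]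
  rw [lintegral_prod_comm_of_symm hHsymm (σ.map Prod.snd) (η.map Prod.snd)]
  ring

theorem lintegral_individualCost (c : X × Y → ℝ≥0∞) {H : Y × Y → ℝ≥0∞}
    (hc : Measurable c) (hH : Measurable H) (η : Measure (X × Y)) (ρ : Measure Y) [SFinite ρ] :
    ∫⁻ p, (c p + 2 * ∫⁻ z, H (p.2, z) ∂ρ) ∂η =
      ∫⁻ p, c p ∂η + 2 * ∫⁻ q, H q ∂((η.map Prod.snd).prod ρ) := by
  have hm : Measurable fun y => ∫⁻ z, H (y, z) ∂ρ := hH.lintegral_prod_right'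
  rw [lintegral_add_left hc, lintegral_const_mul 2 (f := fun p : X × Y => ∫⁻ z, H (p.2, z) ∂ρ)
    (hm.comp measurable_snd), lintegral_prod _ hH.aemeasurable, lintegral_map hm measurable_snd]

/-- First-order optimality condition: a minimizer of the energy among measures with the same first
marginal has no gain, to first order, from replacing its part `η` by `η'`. -/
theorem lintegral_individualCost_le_of_minimizer {c : X × Y → ℝ≥0∞} {H : Y × Y → ℝ≥0∞}
    (hc : Measurable c) (hH : Measurable H) (hHsymm : ∀ y y', H (y, y') = H (y', y))
    {ζ η η' : Measure (X × Y)} [IsFiniteMeasure ζ] [IsFiniteMeasure η] [IsFiniteMeasure η']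
    (hfst : η'.map Prod.fst = η.map Prod.fst)
    (hfin : ∫⁻ p, c p ∂(ζ + η) +
      ∫⁻ q, H q ∂(((ζ + η).map Prod.snd).prod ((ζ + η).map Prod.snd)) ≠ ⊤)
    (hmin : ∀ γ' : Measure (X × Y), γ'.map Prod.fst = (ζ + η).map Prod.fst →
      ∫⁻ p, c p ∂(ζ + η) + ∫⁻ q, H q ∂(((ζ + η).map Prod.snd).prod ((ζ + η).map Prod.snd)) ≤
        ∫⁻ p, c p ∂γ' + ∫⁻ q, H q ∂((γ'.map Prod.snd).prod (γ'.map Prod.snd)))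
    (hη' : ∫⁻ q, H q ∂((η'.map Prod.snd).prod (η'.map Prod.snd)) ≠ ⊤) :
    ∫⁻ p, (c p + 2 * ∫⁻ z, H (p.2, z) ∂((ζ + η).map Prod.snd)) ∂η ≤
      ∫⁻ p, (c p + 2 * ∫⁻ z, H (p.2, z) ∂((ζ + η).map Prod.snd)) ∂η' := by
  rw [lintegral_individualCost c hc hH, lintegral_individualCost c hc hH]
  have hη : ∫⁻ q, H q ∂((η.map Prod.snd).prod (η.map Prod.snd)) ≠ ⊤ := by
    refine ne_top_of_le_ne_top hfin (le_trans ?_ le_add_self)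
    rw [Measure.map_add _ _ measurable_snd, Measure.prod_add, Measure.add_prod, Measure.add_prod]
    simp only [lintegral_add_measure]
    exact le_add_self.trans le_add_self
  set M := ∫⁻ q, H q ∂((η'.map Prod.snd).prod (η'.map Prod.snd)) +
    ∫⁻ q, H q ∂((η.map Prod.snd).prod (η.map Prod.snd)) with hM
  have hMtop : M ≠ ⊤ := ENNReal.add_ne_top.2 ⟨hη', hη⟩
  have key : ∀ t : ℝ≥0∞, t ≠ 0 → t ≤ 1 →
      ∫⁻ p, c p ∂η + 2 * ∫⁻ q, H q ∂((η.map Prod.snd).prod ((ζ + η).map Prod.snd)) ≤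
      ∫⁻ p, c p ∂η' + 2 * ∫⁻ q, H q ∂((η'.map Prod.snd).prod ((ζ + η).map Prod.snd)) + t * M := by
    intro t ht0 ht1
    have httop : t ≠ ⊤ := ne_top_of_le_ne_top ENNReal.one_ne_top ht1
    obtain ⟨σ, hσ, hσfin⟩ : ∃ σ : Measure (X × Y), ζ + η = σ + t • η ∧ IsFiniteMeasure σ := by
      refine ⟨ζ + (1 - t) • η, ?_, ?_⟩
      · rw [add_assoc, ← add_smul, tsub_add_cancel_of_le ht1, one_smul]
      · have : IsFiniteMeasure ((1 - t) • η) := η.smul_finite (by simp)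
        infer_instance
    have hle := hmin (σ + t • η') (by
      rw [hσ, Measure.map_add _ _ measurable_fst, Measure.map_add _ _ measurable_fst,
        Measure.map_smul, Measure.map_smul, hfst])
    rw [hσ] at hfin hle ⊢
    rw [energy_add_smul c hHsymm] at hfin
    rw [energy_add_smul c hHsymm, energy_add_smul c hHsymm] at hle
    have hbase : ∫⁻ p, c p ∂σ + ∫⁻ q, H q ∂((σ.map Prod.snd).prod (σ.map Prod.snd)) ≠ ⊤ :=
      ne_top_of_le_ne_top hfin le_self_add
    rw [ENNReal.add_le_add_iff_left hbase,
      ENNReal.mul_le_mul_iff_right ht0 httop] at hle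
    have hsplit : ∀ θ : Measure Y, SFinite θ →
        ∫⁻ q, H q ∂(θ.prod ((σ + t • η).map Prod.snd)) =
        ∫⁻ q, H q ∂(θ.prod (σ.map Prod.snd)) + t * ∫⁻ q, H q ∂(θ.prod (η.map Prod.snd)) := by
      intro θ _
      rw [Measure.map_add _ _ measurable_snd, Measure.map_smul, Measure.prod_add,
        Measure.prod_smul_right, lintegral_add_measure, lintegral_smul_measure, smul_eq_mul]
    rw [hsplit _ inferInstance, hsplit _ inferInstance]
    calc _ = (∫⁻ p, c p ∂η + 2 * ∫⁻ q, H q ∂((η.map Prod.snd).prod (σ.map Prod.snd)) +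
          t * ∫⁻ q, H q ∂((η.map Prod.snd).prod (η.map Prod.snd))) +
          t * ∫⁻ q, H q ∂((η.map Prod.snd).prod (η.map Prod.snd)) := by ring
      _ ≤ _ := add_le_add_left hle _
      _ = ∫⁻ p, c p ∂η' + 2 * ∫⁻ q, H q ∂((η'.map Prod.snd).prod (σ.map Prod.snd)) + t * M := by
        rw [hM]; ring
      _ ≤ _ := by gcongr; exact le_self_add
  refine ENNReal.le_of_forall_pos_le_add fun ε hε _ => ?_
  obtain ⟨t, ht, htM⟩ : ∃ t : ℝ≥0∞, (t ≠ 0 ∧ t ≤ 1) ∧ t * M ≤ ε := by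
    refine ⟨min 1 (ε / M), ⟨?_, min_le_left _ _⟩, ?_⟩
    · simp [hMtop, hε.ne']
    · rw [mul_comm]
      exact (mul_le_mul_right (min_le_right _ _) _).trans ENNReal.mul_div_le
  exact (key t ht.1 ht.2).trans (by gcongr)

/-- The interaction energy of a mixture is the average of the mutual interaction energies. -/
theorem lintegral_prod_bind_bind {Z : Type*} [MeasurableSpace Z] {H : Y × Y → ℝ≥0∞}
    (hH : Measurable H) (m : Measure Z) [SFinite m] (κ : ProbabilityTheory.Kernel Z Y)
    [ProbabilityTheory.IsMarkovKernel κ] :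
    ∫⁻ q, H q ∂((m.bind κ).prod (m.bind κ)) =
      ∫⁻ x, ∫⁻ x', ∫⁻ q, H q ∂((κ x).prod (κ x')) ∂m ∂m := by
  have hinner : Measurable fun p : Y × Z => ∫⁻ z', H (p.1, z') ∂(κ p.2) :=
    Measurable.lintegral_kernel_prod_right (κ := κ.comap Prod.snd measurable_snd)
      (f := fun p z' => H (p.1, z')) (by fun_prop)
  rw [lintegral_prod _ hH.aemeasurable,
    Measure.lintegral_bind κ.measurable.aemeasurable hH.lintegral_prod_right'.aemeasurable]
  refine lintegral_congr fun x => ?_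
  calc ∫⁻ z, ∫⁻ z', H (z, z') ∂(m.bind κ) ∂(κ x)
      = ∫⁻ z, ∫⁻ x', ∫⁻ z', H (z, z') ∂(κ x') ∂m ∂(κ x) := by
        refine lintegral_congr fun z => ?_
        exact Measure.lintegral_bind κ.measurable.aemeasurable
          (hH.comp measurable_prodMk_left).aemeasurable
    _ = ∫⁻ x', ∫⁻ z, ∫⁻ z', H (z, z') ∂(κ x') ∂(κ x) ∂m :=
        lintegral_lintegral_swap hinner.aemeasurable
    _ = _ := by
        refine lintegral_congr fun x' => ?_
        rw [lintegral_prod _ hH.aemeasurable]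

end FirstVariation

/-- Under the technical approximation hypothesis on measurable families
`(ν_n^y)_{y∈Y}`, every minimizer of the potential functional `J` over `P_μ(X×Y)` is a
Cournot–Nash equilibrium for the cost `Φ(x,y,ν) = c(x,y) + L(y) + 2∫ H(y,·) dν`. -/
theorem minimizers_are_cournotNash
    {X Y : Type*}
    [TopologicalSpace X] [PolishSpace X] [MeasurableSpace X] [BorelSpace X]
    [TopologicalSpace Y] [PolishSpace Y] [MeasurableSpace Y] [BorelSpace Y]
    (μ : Measure X) [IsProbabilityMeasure μ]
    (c : X × Y → ENNReal) (hc : LowerSemicontinuous c)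
    (L : Y → ENNReal) (hL : LowerSemicontinuous L)
    (hLcomp : ∀ κ : NNReal, 0 < κ → IsCompact {y : Y | L y ≤ (κ : ENNReal)})
    (H : Y × Y → ENNReal) (hH : LowerSemicontinuous H)
    (hHsymm : ∀ y y' : Y, H (y, y') = H (y', y))
    -- the potential functional J
    (J : Measure (X × Y) → ENNReal)
    (hJ : ∀ γ : Measure (X × Y), J γ =
      ∫⁻ p, c p ∂γ + ∫⁻ y, L y ∂(γ.map Prod.snd) +
        ∫⁻ q, H q ∂((γ.map Prod.snd).prod (γ.map Prod.snd)))
    -- the individual cost Φ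
    (Φ : X → Y → Measure Y → ENNReal)
    (hΦ : ∀ x y ν, Φ x y ν = c (x, y) + L y + 2 * ∫⁻ z, H (y, z) ∂ν)
    -- finiteness of the infimum
    (hfin : (⨅ γ ∈ {γ : Measure (X × Y) | IsProbabilityMeasure γ ∧ γ.map Prod.fst = μ}, J γ) < ⊤)
    -- the technical hypothesis: approximating measurable families
    (ν : ℕ → Y → Measure Y) (C : ℕ → ENNReal)
    (hC : ∀ n, 0 < C n ∧ C n < ⊤)
    (hνprob : ∀ n y, IsProbabilityMeasure (ν n y))
    (hνmeas : ∀ n, ∀ B : Set Y, MeasurableSet B → Measurable fun y => ν n y B)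
    (hνH : ∀ n, ∀ y y' : Y,
      ∫⁻ q, H q ∂((ν n y).prod (ν n y')) ≤ C n * (1 + L y + L y'))
    (hνΦ : ∀ (x : X) (y : Y) (ρ : Measure Y), IsProbabilityMeasure ρ → Φ x y ρ < ⊤ →
      Tendsto (fun n => ∫⁻ z, Φ x z ρ ∂(ν n y)) atTop (𝓝 (Φ x y ρ))) :
    -- conclusion: every minimizer of J over P_μ(X×Y) is a Cournot–Nash equilibrium
    ∀ γ : Measure (X × Y), IsProbabilityMeasure γ → γ.map Prod.fst = μ →
      (J γ = ⨅ γ' ∈ {γ' : Measure (X × Y) | IsProbabilityMeasure γ' ∧ γ'.map Prod.fst = μ}, J γ') →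
      (∀ᵐ p ∂γ, Φ p.1 p.2 (γ.map Prod.snd) = ⨅ y' : Y, Φ p.1 y' (γ.map Prod.snd)) := by
  intro γ hγ hγμ hmin
  have : Nonempty Y := ⟨(nonempty_of_isProbabilityMeasure γ).some.2⟩
  set ρ : Measure Y := γ.map Prod.snd
  have hρprob : IsProbabilityMeasure ρ := Measure.isProbabilityMeasure_map measurable_snd.aemeasurable
  have hcm : Measurable fun p : X × Y => c p + L p.2 :=
    hc.measurable.add (hL.measurable.comp measurable_snd)
  have hJ' : ∀ γ', J γ' = ∫⁻ p, (c p + L p.2) ∂γ' +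
      ∫⁻ q, H q ∂((γ'.map Prod.snd).prod (γ'.map Prod.snd)) := fun γ' => by
    rw [hJ, lintegral_add_left hc.measurable, lintegral_map hL.measurable measurable_snd]
  have hJtop : J γ ≠ ⊤ := hmin ▸ hfin.ne
  let G : X × Y → ℝ≥0∞ := fun p => c p + L p.2 + 2 * ∫⁻ z, H (p.2, z) ∂ρ
  have hΦG : ∀ x y, Φ x y ρ = G (x, y) := fun x y => hΦ x y ρ
  have hG : LowerSemicontinuous G := by
    have hHρ := LowerSemicontinuous.comp (hH.lintegral_prod_right ρ) (continuous_snd (X := X))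
    simp only [G, two_mul]
    exact (hc.add (LowerSemicontinuous.comp hL continuous_snd)).add (hHρ.add hHρ)
  have hLG : ∀ x y, L y ≤ G (x, y) := fun x y => le_add_self.trans le_self_add
  have hcomp : ∀ a : ℝ≥0∞, a < ⊤ → ∃ K : Set Y, IsCompact K ∧ ∀ x y, G (x, y) ≤ a → y ∈ K := by
    intro a ha
    refine ⟨_, hLcomp (a.toNNReal + 1) (by positivity), fun x y h => ?_⟩
    refine ((hLG x y).trans h).trans ?_
    rw [ENNReal.coe_add, ENNReal.coe_toNNReal ha.ne]
    exact le_self_add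
  have hGγ : ∫⁻ p, G p ∂γ ≠ ⊤ := by
    rw [lintegral_individualCost _ hcm hH.measurable]
    rw [hJ', ENNReal.add_ne_top] at hJtop
    exact ENNReal.add_ne_top.2 ⟨hJtop.1, ENNReal.mul_ne_top (by simp) hJtop.2⟩
  obtain ⟨T, hT, hTG⟩ := exists_measurable_argmin hG hcomp
  have hTle : ∀ p : X × Y, G (p.1, T p.1) ≤ G p := fun p => (hTG p.1).trans_le (iInf_le _ p.2)
  let κ : ℕ → ProbabilityTheory.Kernel X Y := fun n =>
    ⟨fun x => ν n (T x), Measure.measurable_of_measurable_coe _ fun B hB => (hνmeas n B hB).comp hT⟩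
  have hκ : ∀ n, ProbabilityTheory.IsMarkovKernel (κ n) := fun n => ⟨fun x => hνprob n (T x)⟩
  have hF : ∀ n, Measurable fun x => ∫⁻ z, G (x, z) ∂(κ n x) := fun n =>
    hG.measurable.lintegral_kernel_prod_right'
  have hle : ∀ n, ∀ᵐ p ∂γ, G p ≤ ∫⁻ z, G (p.1, z) ∂(κ n p.1) := by
    intro n
    by_contra hnot
    let B : Set (X × Y) := {p | ∫⁻ z, G (p.1, z) ∂(κ n p.1) < G p}
    have hB : MeasurableSet B := measurableSet_lt ((hF n).comp measurable_fst) hG.measurable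
    have hB0 : γ B ≠ 0 := by simpa [ae_iff, B] using hnot
    let η := γ.restrict B
    let η' := (η.map Prod.fst).compProd (κ n)
    have hfst : η'.map Prod.fst = η.map Prod.fst := Measure.fst_compProd _ _
    have hsum : γ.restrict Bᶜ + η = γ := Measure.restrict_compl_add_restrict hB
    have hLTm : Measurable fun x => L (T x) := hL.measurable.comp hT
    have hLT : ∫⁻ x, L (T x) ∂(η.map Prod.fst) ≠ ⊤ := by
      rw [lintegral_map hLTm measurable_fst]
      exact ne_top_of_le_ne_top hGγ ((lintegral_mono' Measure.restrict_le_self le_rfl).trans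
        (lintegral_mono fun p => (hLG p.1 _).trans (hTle p)))
    have hη' : ∫⁻ q, H q ∂((η'.map Prod.snd).prod (η'.map Prod.snd)) ≠ ⊤ := by
      have hsnd : η'.map Prod.snd = (η.map Prod.fst).bind (κ n) := Measure.snd_compProd _ _
      rw [hsnd, lintegral_prod_bind_bind hH.measurable]
      refine ne_top_of_le_ne_top ?_ (lintegral_mono fun x => lintegral_mono fun x' =>
        hνH n (T x) (T x'))
      have hCtop := (hC n).2.ne
      simp only [lintegral_const_mul' _ _ hCtop, lintegral_add_right _ hLTm, lintegral_const,
        lintegral_add_left measurable_const, lintegral_add_right _ measurable_const,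
        lintegral_mul_const _ hLTm]
      finiteness
    have hopt := lintegral_individualCost_le_of_minimizer (ζ := γ.restrict Bᶜ) (η := η) (η' := η')
      hcm hH.measurable hHsymm hfst (by rw [hsum, ← hJ']; exact hJtop)
      (fun γ' hγ' => by
        rw [hsum] at hγ' ⊢
        rw [← hJ', ← hJ', hmin]
        have : IsProbabilityMeasure γ' := by
          have : IsProbabilityMeasure (γ'.map Prod.fst) := by rwa [hγ', hγμ]
          exact Measure.isProbabilityMeasure_of_map Prod.fst
        exact iInf₂_le γ' ⟨this, hγ'.trans hγμ⟩) hη'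
    rw [hsum] at hopt
    refine hopt.not_gt ?_
    have hint : ∫⁻ p, G p ∂η' = ∫⁻ p in B, ∫⁻ z, G (p.1, z) ∂(κ n p.1) ∂γ := by
      rw [Measure.lintegral_compProd hG.measurable, lintegral_map (hF n) measurable_fst]
    change ∫⁻ p, G p ∂η' < ∫⁻ p in B, G p ∂γ
    rw [hint]
    refine setLIntegral_strict_mono hB hB0 hG.measurable
      (ne_top_of_le_ne_top hGγ ?_) (ae_of_all _ fun p hp => hp)
    exact (setLIntegral_mono hG.measurable fun p hp => le_of_lt hp).trans
      (setLIntegral_le_lintegral _ _)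
  filter_upwards [ae_all_iff.2 hle, ae_lt_top hG.measurable hGγ] with p hp hptop
  simp only [hΦG]
  rw [← hTG p.1]
  refine le_antisymm ?_ (hTle p)
  have hlim := hνΦ p.1 (T p.1) ρ hρprob (by rw [hΦG]; exact (hTle p).trans_lt hptop)
  simp only [hΦG] at hlim
  exact ge_of_tendsto' hlim hp
end

section
/- Let X and Y be Polish spaces, c : X×Y → [0,∞] lower semicontinuous, L : Y → [0,∞] lower semicontinuous with compact sublevel sets, and H : Y×Y → [0,∞] lower semicontinuous and symmetric. Assume Hypothesis (E) holds with Borel gluing map G and constant C > 0. Then for all μ0, μ1 ∈ P(X) and every γ0 ∈ P_{μ0}(X×Y), there exists γ1 ∈ P_{μ1}(X×Y) such that J(γ1) ≤ J(γ0) + 4C·W1(μ0,μ1), where J(γ) := ∫_{X×Y} c dγ + ∫_Y L d((π_Y)_♯γ) + ∫_{Y×Y} H d((π_Y)_♯γ)⊗((π_Y)_♯γ). -/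
open MeasureTheory Filter Topology

/-- Weak lower semicontinuity of the integral of a nonnegative continuous function. -/
lemma lowerSemicontinuous_lintegral_of_continuous {Ω : Type*} [TopologicalSpace Ω]
    [MeasurableSpace Ω] [OpensMeasurableSpace Ω] {f : Ω → NNReal} (hf : Continuous f) :
    LowerSemicontinuous fun μ : ProbabilityMeasure Ω ↦ ∫⁻ ω, f ω ∂(μ : Measure Ω) := by
  have hmin (n : ℕ) : Continuous fun ω ↦ min (f ω) n := hf.min continuous_const
  have heq (μ : ProbabilityMeasure Ω) : ∫⁻ ω, f ω ∂(μ : Measure Ω) =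
      ⨆ n : ℕ, ∫⁻ ω, ((min (f ω) n : NNReal) : ENNReal) ∂(μ : Measure Ω) := by
    rw [← lintegral_iSup (fun n ↦ (hmin n).measurable.coe_nnreal_ennreal)]
    · refine lintegral_congr fun ω ↦ le_antisymm ?_ (iSup_le fun n ↦ by simp)
      obtain ⟨n, hn⟩ := exists_nat_ge (f ω)
      exact le_iSup_of_le n (by simp [hn])
    · intro m n hmn ω
      simp only [ENNReal.coe_le_coe]
      gcongr
  simp_rw [heq]
  refine lowerSemicontinuous_iSup fun n ↦ Continuous.lowerSemicontinuous ?_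
  refine ProbabilityMeasure.continuous_lintegral_boundedContinuousFunction
    (BoundedContinuousFunction.mkOfBound ⟨_, hmin n⟩ n fun x y ↦ ?_)
  rw [NNReal.dist_eq, abs_le]
  have hx : ((min (f x) n : NNReal) : ℝ) ≤ n := by exact_mod_cast min_le_right (f x) n
  have hy : ((min (f y) n : NNReal) : ℝ) ≤ n := by exact_mod_cast min_le_right (f y) n
  have hx0 := (min (f x) (n : NNReal)).coe_nonneg
  have hy0 := (min (f y) (n : NNReal)).coe_nonneg
  simp only [ContinuousMap.coe_mk]
  constructor <;> linarith

/-- The couplings of two probability measures on Polish spaces form a weakly compact set. -/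
lemma isCompact_couplings {X Y : Type*}
    [TopologicalSpace X] [PolishSpace X] [MeasurableSpace X] [BorelSpace X]
    [TopologicalSpace Y] [PolishSpace Y] [MeasurableSpace Y] [BorelSpace Y]
    (μ : Measure X) (ν : Measure Y) [IsProbabilityMeasure μ] [IsProbabilityMeasure ν] :
    IsCompact {π : ProbabilityMeasure (X × Y) |
      (π : Measure (X × Y)).map Prod.fst = μ ∧ (π : Measure (X × Y)).map Prod.snd = ν} := by
  set S := {π : ProbabilityMeasure (X × Y) |
    (π : Measure (X × Y)).map Prod.fst = μ ∧ (π : Measure (X × Y)).map Prod.snd = ν}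
  have hclosed : IsClosed S := by
    let := TopologicalSpace.upgradeIsCompletelyMetrizable X
    let := TopologicalSpace.upgradeIsCompletelyMetrizable Y
    have h1 := (isClosed_singleton (X := ProbabilityMeasure X) (x := ⟨μ, inferInstance⟩)).preimage
      (ProbabilityMeasure.continuous_map (continuous_fst (X := X) (Y := Y)))
    have h2 := (isClosed_singleton (X := ProbabilityMeasure Y) (x := ⟨ν, inferInstance⟩)).preimage
      (ProbabilityMeasure.continuous_map (continuous_snd (X := X) (Y := Y)))
    convert h1.inter h2 using 1
    ext π
    exact ⟨fun h ↦ ⟨Subtype.ext h.1, Subtype.ext h.2⟩,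
      fun h ↦ ⟨congrArg Subtype.val h.1, congrArg Subtype.val h.2⟩⟩
  rw [← hclosed.closure_eq]
  refine isCompact_closure_of_isTightMeasureSet (IsTightMeasureSet.prodMk ?_ ?_)
  · refine (isTightMeasureSet_singleton (μ := μ)).subset ?_
    rintro _ ⟨_, ⟨π, hπ, rfl⟩, rfl⟩
    exact hπ.1
  · refine (isTightMeasureSet_singleton (μ := ν)).subset ?_
    rintro _ ⟨_, ⟨π, hπ, rfl⟩, rfl⟩
    exact hπ.2

/-- The infimum defining the Wasserstein distance of order one is attained. -/
lemma exists_coupling_lintegral_edist_le {X : Type*}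
    [MetricSpace X] [CompleteSpace X] [SecondCountableTopology X]
    [MeasurableSpace X] [BorelSpace X]
    (μ0 μ1 : Measure X) [IsProbabilityMeasure μ0] [IsProbabilityMeasure μ1] :
    ∃ π : Measure (X × X), IsProbabilityMeasure π ∧ π.map Prod.fst = μ0 ∧ π.map Prod.snd = μ1 ∧
      ∫⁻ p, edist p.1 p.2 ∂π ≤
        ⨅ π ∈ {π : Measure (X × X) | IsProbabilityMeasure π ∧
            π.map Prod.fst = μ0 ∧ π.map Prod.snd = μ1},
          ∫⁻ p, edist p.1 p.2 ∂π := by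
  have hlsc := lowerSemicontinuous_lintegral_of_continuous
    (continuous_nndist : Continuous fun p : X × X ↦ nndist p.1 p.2)
  simp_rw [← edist_nndist] at hlsc
  obtain ⟨π, ⟨hπ0, hπ1⟩, hmin⟩ := LowerSemicontinuousOn.exists_isMinOn
    (s := {π : ProbabilityMeasure (X × X) |
      (π : Measure (X × X)).map Prod.fst = μ0 ∧ (π : Measure (X × X)).map Prod.snd = μ1})
    ⟨⟨μ0.prod μ1, inferInstance⟩, measurePreserving_fst.map_eq, measurePreserving_snd.map_eq⟩
    (isCompact_couplings μ0 μ1)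
    (hlsc.lowerSemicontinuousOn _)
  refine ⟨π, inferInstance, hπ0, hπ1, le_iInf₂ ?_⟩
  rintro ρ ⟨hρ, hρ0, hρ1⟩
  exact hmin (a := ⟨ρ, hρ⟩) ⟨hρ0, hρ1⟩

/-- Gluing lemma: a coupling on `X × Z` and a measure on `X × Y` with the same first marginal
are marginals of a common measure. -/
lemma exists_gluing {X Y Z : Type*} [MeasurableSpace X] [MeasurableSpace Z]
    [MeasurableSpace Y] [StandardBorelSpace Y]
    (π : Measure (X × Z)) (γ : Measure (X × Y)) [IsProbabilityMeasure π] [IsProbabilityMeasure γ]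
    (h : π.map Prod.fst = γ.map Prod.fst) :
    ∃ η : Measure ((X × Z) × Y), IsProbabilityMeasure η ∧ η.map Prod.fst = π ∧
      η.map (fun q ↦ (q.1.1, q.2)) = γ := by
  obtain ⟨-, y⟩ := γ.nonempty_of_neZero.some
  have : Nonempty Y := ⟨y⟩
  refine ⟨π.compProd (γ.condKernel.comap Prod.fst measurable_fst), inferInstance,
    Measure.fst_compProd π _, ?_⟩
  have hm : Measurable fun q : (X × Z) × Y ↦ (q.1.1, q.2) := by fun_prop
  refine Measure.ext_of_lintegral _ fun f hf ↦ ?_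
  rw [lintegral_map hf hm, Measure.lintegral_compProd (by fun_prop),
    ← Measure.lintegral_condKernel hf]
  have hk : Measurable fun x ↦ ∫⁻ y, f (x, y) ∂(γ.condKernel x) := hf.lintegral_kernel_prod_right'
  rw [Measure.fst, ← h, lintegral_map hk measurable_fst]
  rfl

/-- **gluing method.** Under Hypothesis (E) (existence of a consistent Borel gluing
map `G` with Lipschitz-type estimates of constant `C`), for any distributions `μ0, μ1` of players
and any plan `γ0` with first marginal `μ0` there is a plan `γ1` with first marginal `μ1` whose
potential energy `J` exceeds that of `γ0` by at most `4 C W₁(μ0, μ1)`. -/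
theorem gluing_method
    {X Y : Type*}
    [MetricSpace X] [CompleteSpace X] [SecondCountableTopology X]
    [MeasurableSpace X] [BorelSpace X]
    [TopologicalSpace Y] [PolishSpace Y] [MeasurableSpace Y] [BorelSpace Y]
    (c : X × Y → ENNReal) (hc : LowerSemicontinuous c)
    (L : Y → ENNReal) (hL : LowerSemicontinuous L)
    (hLcomp : ∀ κ : NNReal, 0 < κ → IsCompact {y : Y | L y ≤ (κ : ENNReal)})
    (H : Y × Y → ENNReal) (hH : LowerSemicontinuous H)
    (hHsymm : ∀ y y' : Y, H (y, y') = H (y', y))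
    (J : Measure (X × Y) → ENNReal)
    (hJ : ∀ γ : Measure (X × Y), J γ =
      ∫⁻ p, c p ∂γ + ∫⁻ y, L y ∂(γ.map Prod.snd) +
        ∫⁻ q, H q ∂((γ.map Prod.snd).prod (γ.map Prod.snd)))
    -- Hypothesis (E): Borel gluing map with constant C > 0
    (G : X × X × Y → Y) (hGmeas : Measurable G)
    (hGcons : ∀ (x : X) (y : Y), G (x, x, y) = y)
    (C : ENNReal) (hCpos : 0 < C) (hCfin : C < ⊤)
    (hGc : ∀ (x0 x1 : X) (y : Y),
      c (x1, G (x1, x0, y)) ≤ c (x0, y) + C * edist x1 x0)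
    (hGL : ∀ (x0 x1 : X) (y : Y),
      L (G (x1, x0, y)) ≤ L y + C * edist x1 x0)
    (hGH : ∀ (x0 x1 x0' x1' : X) (y y' : Y),
      H (G (x1, x0, y), G (x1', x0', y')) ≤ H (y, y') + C * (edist x1 x0 + edist x1' x0'))
    (μ0 μ1 : Measure X) [IsProbabilityMeasure μ0] [IsProbabilityMeasure μ1]
    (γ0 : Measure (X × Y)) [IsProbabilityMeasure γ0] (hγ0 : γ0.map Prod.fst = μ0) :
    ∃ γ1 : Measure (X × Y), IsProbabilityMeasure γ1 ∧ γ1.map Prod.fst = μ1 ∧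
      J γ1 ≤ J γ0 + 4 * C *
        ⨅ π ∈ {π : Measure (X × X) | IsProbabilityMeasure π ∧
            π.map Prod.fst = μ0 ∧ π.map Prod.snd = μ1},
          ∫⁻ p, edist p.1 p.2 ∂π := by
  obtain ⟨π, hπ, hπ0, hπ1, hW⟩ := exists_coupling_lintegral_edist_le μ0 μ1
  obtain ⟨η, hη, hηπ, hηγ⟩ := exists_gluing π γ0 (hπ0.trans hγ0.symm)
  set W := ∫⁻ p, edist p.1 p.2 ∂π with hWdef
  have hcm : Measurable c := hc.measurable
  have hLm : Measurable L := hL.measurable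
  have hHm : Measurable H := hH.measurable
  let g : (X × X) × Y → Y := fun q ↦ G (q.1.2, q.1.1, q.2)
  have hg : Measurable g := by fun_prop
  have hedist : Measurable fun q : (X × X) × Y ↦ edist q.1.2 q.1.1 := by fun_prop
  have hm0 : Measurable fun q : (X × X) × Y ↦ (q.1.1, q.2) := by fun_prop
  have hm1 : Measurable fun q : (X × X) × Y ↦ (q.1.2, g q) := by fun_prop
  have hdist : ∫⁻ q, edist q.1.2 q.1.1 ∂η = W := by
    rw [hWdef, ← hηπ, lintegral_map (by fun_prop) measurable_fst]
    simp_rw [edist_comm]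
  have hsnd0 : γ0.map Prod.snd = η.map Prod.snd := by
    rw [← hηγ, Measure.map_map measurable_snd hm0]
    rfl
  have hsnd1 : (η.map fun q ↦ (q.1.2, g q)).map Prod.snd = η.map g := by
    rw [Measure.map_map measurable_snd hm1]
    rfl
  refine ⟨η.map fun q ↦ (q.1.2, g q), Measure.isProbabilityMeasure_map hm1.aemeasurable, ?_, ?_⟩
  · rw [Measure.map_map measurable_fst hm1, ← hπ1, ← hηπ,
      Measure.map_map measurable_snd measurable_fst]
    rfl
  have hc_le : ∫⁻ p, c p ∂(η.map fun q ↦ (q.1.2, g q)) ≤ ∫⁻ p, c p ∂γ0 + C * W := by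
    rw [← hηγ, lintegral_map hcm hm1, lintegral_map hcm hm0, ← hdist,
      ← lintegral_const_mul C hedist, ← lintegral_add_left (by fun_prop)]
    exact lintegral_mono fun q ↦ hGc _ _ _
  have hL_le : ∫⁻ y, L y ∂(η.map g) ≤ ∫⁻ y, L y ∂(η.map Prod.snd) + C * W := by
    rw [lintegral_map hLm hg, lintegral_map hLm measurable_snd, ← hdist,
      ← lintegral_const_mul C hedist, ← lintegral_add_left (by fun_prop)]
    exact lintegral_mono fun q ↦ hGL _ _ _
  have hH_le : ∫⁻ q, H q ∂((η.map g).prod (η.map g)) ≤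
      ∫⁻ q, H q ∂((η.map Prod.snd).prod (η.map Prod.snd)) + C * (W + W) := by
    have hfst : ∫⁻ r, edist r.1.1.2 r.1.1.1 ∂(η.prod η) = W := by
      rw [← hdist]
      exact (measurePreserving_fst (μ := η) (ν := η)).lintegral_comp hedist
    have hsnd : ∫⁻ r, edist r.2.1.2 r.2.1.1 ∂(η.prod η) = W := by
      rw [← hdist]
      exact (measurePreserving_snd (μ := η) (ν := η)).lintegral_comp hedist
    rw [Measure.map_prod_map η η hg hg, Measure.map_prod_map η η measurable_snd measurable_snd,
      lintegral_map hHm (hg.prodMap hg), lintegral_map hHm (measurable_snd.prodMap measurable_snd)]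
    calc ∫⁻ r, H (Prod.map g g r) ∂(η.prod η)
        ≤ ∫⁻ r, (H (Prod.map Prod.snd Prod.snd r) +
            C * (edist r.1.1.2 r.1.1.1 + edist r.2.1.2 r.2.1.1)) ∂(η.prod η) :=
          lintegral_mono fun r ↦ hGH _ _ _ _ _ _
      _ = _ := by
        rw [lintegral_add_left (by fun_prop),
          lintegral_const_mul C (by fun_prop), lintegral_add_left (by fun_prop), hfst, hsnd]
  rw [hJ, hJ, hsnd1, hsnd0]
  calc _ ≤ (∫⁻ p, c p ∂γ0 + C * W) + (∫⁻ y, L y ∂(η.map Prod.snd) + C * W) +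
        (∫⁻ q, H q ∂((η.map Prod.snd).prod (η.map Prod.snd)) + C * (W + W)) := by gcongr
    _ = ∫⁻ p, c p ∂γ0 + ∫⁻ y, L y ∂(η.map Prod.snd) +
        ∫⁻ q, H q ∂((η.map Prod.snd).prod (η.map Prod.snd)) + 4 * C * W := by ring
    _ ≤ _ := by gcongr
end
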